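/- arXiv:1202.1869 — 2 statements merged into one kernel-verified Lean document; each statement's English description precedes it below -/
import Mathlib

section
/- Let τ be a complex number with Im τ > 0, let q = e^{2πiτ}, let m, n be positive integers, and let y₁, y₂, …, y_n be complex numbers with y₁ + y₂ + ⋯ + y_n = 0. Then for every complex number z, ∑_{k=0}^{mn-1} q^{k²/2} e^{2kiz} ∏_{j=1}^{n} θ₃(mz + y_j + kmπτ | m²nτ) = F_{m,n}(y₁, …, y_n | τ) · θ₃(z | τ), where F_{m,n}(y₁, …, y_n | τ) = ((−iτ)^{(1−n)/2} / (m²n)^{n/2}) · e^{(y₁²+⋯+y_n²)/(m²nπτ i)} · G_{m,n}(y₁/(m²nτ), …, y_n/(m²nτ) | −1/(m²nτ)). -/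
open scoped BigOperators

/-- The Jacobi theta function θ₃(z|τ) = ∑_{n∈ℤ} q^{n²/2} e^{2niz}, where q = e^{2πiτ}. -/
noncomputable def θ₃ (z τ : ℂ) : ℂ :=
  ∑' k : ℤ, Complex.exp (2 * Real.pi * Complex.I * τ * ((k : ℂ) ^ 2 / 2)) *
    Complex.exp (2 * (k : ℂ) * Complex.I * z)

/-- G_{m,n}(y₁,…,y_n|τ) = mn · ∑_{r₁+⋯+r_n=0} q^{(r₁²+⋯+r_n²)/2} e^{2i(r₁y₁+⋯+r_ny_n)}. -/
noncomputable def G (m n : ℕ) (y : Fin n → ℂ) (τ : ℂ) : ℂ :=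
  (m : ℂ) * (n : ℂ) * ∑' r : {r : Fin n → ℤ // ∑ j, r j = 0},
    Complex.exp (2 * Real.pi * Complex.I * τ * ((∑ j, ((r.1 j : ℂ)) ^ 2) / 2)) *
    Complex.exp (2 * Complex.I * ∑ j, (r.1 j : ℂ) * y j)

/-!
Apply the Jacobi imaginary transformation to each theta factor. As the `yⱼ` sum to zero, the
resulting Gaussian factors combine into `e^{∑ yⱼ² / (m²nπτi)}` times one that cancels the weight
`q^{k²/2} e^{2kiz}` down to `e^{z²/(πτi)}`, and `k` survives only as a shift of every argument by
`πk/(mn)`. Expanding the product as a sum over `ℤⁿ`, the sum over `k` is then a sum of powers of a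
root of unity and keeps exactly the tuples whose coordinate sum is divisible by `mn`. Such a tuple
is uniquely `(mu, …, mu) + r` with `r` of sum zero, and its quadratic and linear forms have no cross
terms: the sum over `u` is `θ₃(z/τ | -1/τ)`, which is transformed back, and the sum over `r` gives
`G`.
-/

open Complex Real

section Series

lemma summable_norm_prod_and_prod_tsum_fin {R : Type*} [NormedCommRing R] [CompleteSpace R]
    {n : ℕ} {κ : Fin n → Type*} (f : ∀ j, κ j → R) (hf : ∀ j, Summable fun k => ‖f j k‖) :
    (Summable fun r : ∀ j, κ j => ‖∏ j, f j (r j)‖) ∧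
      ∏ j, ∑' k, f j k = ∑' r : ∀ j, κ j, ∏ j, f j (r j) := by
  induction n with
  | zero => exact ⟨.of_finite, by simp⟩
  | succ n ih =>
    obtain ⟨hs, hp⟩ := ih (fun j => f j.succ) fun j => hf j.succ
    rw [← (Fin.consEquiv κ).summable_iff, Fin.prod_univ_succ, hp,
      tsum_mul_tsum_of_summable_norm (hf 0) hs, ← (Fin.consEquiv κ).tsum_eq]
    simpa [Function.comp_def, Fin.consEquiv, Fin.prod_univ_succ] using (hf 0).mul_norm hs

lemma summable_norm_prod_and_prod_tsum {ι R : Type*} [Fintype ι] [NormedCommRing R]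
    [CompleteSpace R] {κ : ι → Type*} (f : ∀ j, κ j → R) (hf : ∀ j, Summable fun k => ‖f j k‖) :
    (Summable fun r : ∀ j, κ j => ‖∏ j, f j (r j)‖) ∧
      ∏ j, ∑' k, f j k = ∑' r : ∀ j, κ j, ∏ j, f j (r j) := by
  let e := (Fintype.equivFin ι).symm
  have hreindex (r : ∀ i, κ (e i)) :
      ∏ j, f j (Equiv.piCongrLeft κ e r j) = ∏ i, f (e i) (r i) := by
    simp [← e.prod_comp]
  rw [← (Equiv.piCongrLeft κ e).summable_iff, ← (Equiv.piCongrLeft κ e).tsum_eq, ← e.prod_comp]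
  simp only [Function.comp_def, hreindex]
  exact summable_norm_prod_and_prod_tsum_fin (fun i => f (e i)) fun i => hf (e i)

lemma sum_range_zpow_pow_of_isPrimitiveRoot {K : Type*} [Field K] {ζ : K} {N : ℕ}
    (hζ : IsPrimitiveRoot ζ N) (s : ℤ) :
    ∑ k ∈ Finset.range N, (ζ ^ s) ^ k = if (N : ℤ) ∣ s then (N : K) else 0 := by
  split_ifs with hs
  · simp [(hζ.zpow_eq_one_iff_dvd s).2 hs]
  · rw [geom_sum_eq (mt (hζ.zpow_eq_one_iff_dvd s).1 hs), ← zpow_natCast, zpow_comm,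
      zpow_natCast, hζ.pow_eq_one, one_zpow, sub_self, zero_div]

end Series

section Lattice

variable {ι : Type*} [Fintype ι]

lemma sum_const_add_eq_mul_card (c : ℤ) {r : ι → ℤ} (hr : ∑ j, r j = 0) :
    ∑ j, (c + r j) = c * Fintype.card ι := by
  simp [Finset.sum_add_distrib, hr, mul_comm]

/-- Decomposition of an integer tuple whose coordinate sum is divisible by `m * card ι` into the
constant tuple `m * u`, where `u` is the quotient, and a zero-sum tuple. It turns the filtered
lattice sum over tuples into a double sum. -/
@[simps]
def zeroSumShiftEquiv [Nonempty ι] {m : ℕ} (hm : m ≠ 0) :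
    ℤ × {r : ι → ℤ // ∑ j, r j = 0} ≃
      {r : ι → ℤ // ((m * Fintype.card ι : ℕ) : ℤ) ∣ ∑ j, r j} where
  toFun p := ⟨fun j => m * p.1 + p.2.1 j, p.1, by
    rw [sum_const_add_eq_mul_card _ p.2.2]; push_cast; ring⟩
  invFun r := ((∑ j, r.1 j) / (m * Fintype.card ι : ℕ),
    ⟨fun j => r.1 j - m * ((∑ i, r.1 i) / (m * Fintype.card ι : ℕ)), by
      have h := Int.mul_ediv_cancel' r.2
      rw [Finset.sum_sub_distrib, sub_eq_zero]
      conv_lhs => rw [← h]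
      simp
      ring⟩)
  left_inv p := by
    have hN : ((m * Fintype.card ι : ℕ) : ℤ) ≠ 0 := by
      exact_mod_cast mul_ne_zero hm Fintype.card_ne_zero
    have h : (∑ j, (m * p.1 + p.2.1 j)) / ((m * Fintype.card ι : ℕ) : ℤ) = p.1 := by
      rw [sum_const_add_eq_mul_card _ p.2.2, mul_right_comm, ← Nat.cast_mul,
        Int.mul_ediv_cancel_left _ hN]
    exact Prod.ext h (Subtype.ext (funext fun j => by simp only [h, add_sub_cancel_left]))
  right_inv r := by ext; simp

end Lattice

section Powers

lemma ofReal_mul_cpow {c : ℝ} (hc : 0 < c) (w s : ℂ) :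
    (c * w) ^ s = (c : ℂ) ^ s * w ^ s := by
  rcases eq_or_ne w 0 with rfl | hw
  · rcases eq_or_ne s 0 with rfl | hs <;> simp [*]
  have hc' : (c : ℂ) ≠ 0 := ofReal_ne_zero.2 hc.ne'
  rw [cpow_def_of_ne_zero (mul_ne_zero hc' hw), log_ofReal_mul hc hw, add_mul, Complex.exp_add,
    cpow_def_of_ne_zero hw, cpow_def_of_ne_zero hc', ofReal_log hc.le]

lemma one_div_ofReal_mul_cpow_half_pow {c : ℝ} (hc : 0 < c) {w : ℂ} (hw : w ≠ 0) (n : ℕ) :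
    (1 / (c * w) ^ (1 / 2 : ℂ)) ^ n =
      w ^ ((1 - (n : ℂ)) / 2) / (c : ℂ) ^ ((n : ℂ) / 2) * (1 / w ^ (1 / 2 : ℂ)) := by
  have hw' : w ^ (1 / 2 : ℂ) ≠ 0 := by simp [cpow_eq_zero_iff, hw]
  rw [ofReal_mul_cpow hc, sub_div, cpow_sub _ _ hw, one_div_pow, mul_pow, ← cpow_nat_mul,
    ← cpow_nat_mul, mul_one_div]
  field_simp

end Powers

section Theta

lemma im_sq_mul_natCast_mul_pos {m n : ℕ} (hm : m ≠ 0) (hn : n ≠ 0) {τ : ℂ} (hτ : 0 < τ.im) :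
    0 < ((m : ℂ) ^ 2 * n * τ).im := by
  have hcast : (m : ℂ) ^ 2 * n * τ = ((m ^ 2 * n : ℝ) : ℂ) * τ := by push_cast; rfl
  rw [hcast, im_ofReal_mul]
  positivity

lemma im_neg_one_div_pos {τ : ℂ} (hτ : 0 < τ.im) : 0 < (-1 / τ).im := by
  simpa [neg_div] using UpperHalfPlane.im_inv_neg_coe_pos ⟨τ, hτ⟩

variable {ι : Type*} [Fintype ι]

/-- The theta function of the root lattice of zero-sum integer tuples (`A_{n-1}` for `n = card ι`),
in the normalisation of `jacobiTheta₂`: arguments are not divided by `π`. -/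
noncomputable def zeroSumTheta (b : ι → ℂ) (τ : ℂ) : ℂ :=
  ∑' r : {r : ι → ℤ // ∑ j, r j = 0}, ∏ j, jacobiTheta₂_term (r.1 j) (b j) τ

lemma prod_jacobiTheta₂_term (r : ι → ℤ) (b : ι → ℂ) (τ : ℂ) :
    ∏ j, jacobiTheta₂_term (r j) (b j) τ =
      cexp (2 * π * I * ∑ j, r j * b j + π * I * (∑ j, (r j : ℂ) ^ 2) * τ) := by
  simp only [jacobiTheta₂_term, ← Complex.exp_sum, Finset.sum_add_distrib, Finset.mul_sum,
    Finset.sum_mul, mul_assoc]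

lemma prod_jacobiTheta₂_term_add_const (r : ι → ℤ) (b : ι → ℂ) (w τ : ℂ) :
    ∏ j, jacobiTheta₂_term (r j) (b j + w) τ =
      cexp (2 * π * I * w) ^ (∑ j, r j) * ∏ j, jacobiTheta₂_term (r j) (b j) τ := by
  simp only [prod_jacobiTheta₂_term, ← exp_int_mul, ← Complex.exp_add, mul_add,
    Finset.sum_add_distrib, ← Finset.sum_mul]
  push_cast
  ring_nf

lemma prod_jacobiTheta₂_term_const_add {r : ι → ℤ} (hr : ∑ j, r j = 0) {b : ι → ℂ}
    (hb : ∑ j, b j = 0) (m : ℕ) (u : ℤ) (a τ : ℂ) :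
    ∏ j, jacobiTheta₂_term (m * u + r j) (a + b j) τ =
      jacobiTheta₂_term u (m * Fintype.card ι * a) (m ^ 2 * Fintype.card ι * τ) *
        ∏ j, jacobiTheta₂_term (r j) (b j) τ := by
  have hr' : ∑ j, (r j : ℂ) = 0 := by exact_mod_cast hr
  have hlin : ∑ j, ((m * u + r j : ℤ) : ℂ) * (a + b j) =
      u * (m * Fintype.card ι * a) + ∑ j, r j * b j := by
    push_cast
    simp only [add_mul, mul_add, Finset.sum_add_distrib, ← Finset.mul_sum, ← Finset.sum_mul, hr',
      hb, Finset.sum_const, Finset.card_univ, nsmul_eq_mul]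
    ring
  have hquad : ∑ j, ((m * u + r j : ℤ) : ℂ) ^ 2 =
      u ^ 2 * (m ^ 2 * Fintype.card ι) + ∑ j, (r j : ℂ) ^ 2 := by
    push_cast
    simp only [add_sq, Finset.sum_add_distrib, ← Finset.mul_sum, hr', Finset.sum_const,
      Finset.card_univ, nsmul_eq_mul]
    ring
  rw [prod_jacobiTheta₂_term, prod_jacobiTheta₂_term, hlin, hquad, jacobiTheta₂_term,
    ← Complex.exp_add]
  ring_nf

lemma summable_norm_prod_jacobiTheta₂_term (b : ι → ℂ) {τ : ℂ} (hτ : 0 < τ.im) :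
    Summable fun r : ι → ℤ => ‖∏ j, jacobiTheta₂_term (r j) (b j) τ‖ :=
  (summable_norm_prod_and_prod_tsum _
    fun j => ((summable_jacobiTheta₂_term_iff (b j) τ).2 hτ).norm).1

lemma prod_jacobiTheta₂ (b : ι → ℂ) {τ : ℂ} (hτ : 0 < τ.im) :
    ∏ j, jacobiTheta₂ (b j) τ = ∑' r : ι → ℤ, ∏ j, jacobiTheta₂_term (r j) (b j) τ :=
  (summable_norm_prod_and_prod_tsum _
    fun j => ((summable_jacobiTheta₂_term_iff (b j) τ).2 hτ).norm).2

lemma sum_range_prod_jacobiTheta₂_add_div {N : ℕ} (hN : N ≠ 0) (b : ι → ℂ) {τ : ℂ}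
    (hτ : 0 < τ.im) :
    ∑ k ∈ Finset.range N, ∏ j, jacobiTheta₂ (b j + k / N) τ =
      N * ∑' r : {r : ι → ℤ // (N : ℤ) ∣ ∑ j, r j}, ∏ j, jacobiTheta₂_term (r.1 j) (b j) τ := by
  have hterm (k : ℕ) (r : ι → ℤ) : ∏ j, jacobiTheta₂_term (r j) (b j + k / N) τ =
      (cexp (2 * π * I / N) ^ ∑ j, r j) ^ k * ∏ j, jacobiTheta₂_term (r j) (b j) τ := by
    have hroot : cexp (2 * π * I * (k / N)) = cexp (2 * π * I / N) ^ k := by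
      rw [← Complex.exp_nat_mul]
      ring_nf
    rw [prod_jacobiTheta₂_term_add_const, hroot, ← zpow_natCast, zpow_comm, zpow_natCast]
  calc ∑ k ∈ Finset.range N, ∏ j, jacobiTheta₂ (b j + k / N) τ
    _ = ∑ k ∈ Finset.range N, ∑' r : ι → ℤ, ∏ j, jacobiTheta₂_term (r j) (b j + k / N) τ :=
        Finset.sum_congr rfl fun k _ => prod_jacobiTheta₂ _ hτ
    _ = ∑' r : ι → ℤ, ∑ k ∈ Finset.range N, ∏ j, jacobiTheta₂_term (r j) (b j + k / N) τ :=
        (Summable.tsum_finsetSum fun k _ =>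
          (summable_norm_prod_jacobiTheta₂_term _ hτ).of_norm).symm
    _ = ∑' r : ι → ℤ, N * {r : ι → ℤ | (N : ℤ) ∣ ∑ j, r j}.indicator
          (fun r => ∏ j, jacobiTheta₂_term (r j) (b j) τ) r := by
        refine tsum_congr fun r => ?_
        simp only [hterm, ← Finset.sum_mul, Set.indicator_apply, Set.mem_ofPred_eq,
          sum_range_zpow_pow_of_isPrimitiveRoot (isPrimitiveRoot_exp N hN)]
        split_ifs <;> simp
    _ = _ := by rw [tsum_mul_left, ← tsum_subtype]; rfl

lemma sum_range_prod_jacobiTheta₂_add_add_div [Nonempty ι] {m : ℕ} (hm : m ≠ 0) {τ : ℂ}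
    (hτ : 0 < τ.im) {b : ι → ℂ} (hb : ∑ j, b j = 0) (a : ℂ) :
    ∑ k ∈ Finset.range (m * Fintype.card ι),
        ∏ j, jacobiTheta₂ (a + b j + k / (m * Fintype.card ι : ℕ)) τ =
      m * Fintype.card ι * zeroSumTheta b τ *
        jacobiTheta₂ (m * Fintype.card ι * a) (m ^ 2 * Fintype.card ι * τ) := by
  have hsummable : Summable fun r : {r : ι → ℤ // ∑ j, r j = 0} =>
      ‖∏ j, jacobiTheta₂_term (r.1 j) (b j) τ‖ :=
    (summable_norm_prod_jacobiTheta₂_term b hτ).subtype _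
  rw [sum_range_prod_jacobiTheta₂_add_div (mul_ne_zero hm Fintype.card_ne_zero) _ hτ,
    ← (zeroSumShiftEquiv hm).tsum_eq]
  simp only [zeroSumShiftEquiv_apply_coe]
  rw [tsum_congr fun p : ℤ × {r : ι → ℤ // ∑ j, r j = 0} =>
      prod_jacobiTheta₂_term_const_add p.2.2 hb m p.1 a τ,
    ← tsum_mul_tsum_of_summable_norm ((summable_jacobiTheta₂_term_iff _ _).2
      (im_sq_mul_natCast_mul_pos hm Fintype.card_ne_zero hτ)).norm hsummable,
    jacobiTheta₂, zeroSumTheta]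
  push_cast
  ring

lemma prod_jacobiTheta₂_functional_equation {b : ι → ℂ} (hb : ∑ j, b j = 0) (a τ : ℂ) :
    ∏ j, jacobiTheta₂ (a + b j) τ =
      (1 / (-I * τ) ^ (1 / 2 : ℂ)) ^ Fintype.card ι *
        cexp (-π * I * (Fintype.card ι * a ^ 2 + ∑ j, b j ^ 2) / τ) *
        ∏ j, jacobiTheta₂ ((a + b j) / τ) (-1 / τ) := by
  have hsq : ∑ j, (a + b j) ^ 2 = Fintype.card ι * a ^ 2 + ∑ j, b j ^ 2 := by
    simp [add_sq, Finset.sum_add_distrib, ← Finset.mul_sum, hb]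
  simp only [jacobiTheta₂_functional_equation _ τ, Finset.prod_mul_distrib, Finset.prod_const,
    Finset.card_univ, ← Complex.exp_sum, ← Finset.sum_div, ← Finset.mul_sum, hsq]

lemma jacobiTheta₂_term_mul_exp_add_mul_sq (k : ℤ) (x : ℂ) {τ : ℂ} (hτ : τ ≠ 0) :
    jacobiTheta₂_term k x τ * cexp (-π * I * (x + k * τ) ^ 2 / τ) =
      cexp (-π * I * x ^ 2 / τ) := by
  rw [jacobiTheta₂_term, ← Complex.exp_add]
  congr 1
  field_simp
  ring

lemma jacobiTheta₂_term_mul_prod_functional_equation {m : ℕ} (hm : m ≠ 0) [Nonempty ι] {τ : ℂ}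
    (hτ : τ ≠ 0) {w : ι → ℂ} (hw : ∑ j, w j = 0) (k : ℕ) (x : ℂ) :
    jacobiTheta₂_term k x τ *
        ∏ j, jacobiTheta₂ (m * x + w j + k * m * τ) (m ^ 2 * Fintype.card ι * τ) =
      (1 / (-I * (m ^ 2 * Fintype.card ι * τ)) ^ (1 / 2 : ℂ)) ^ Fintype.card ι *
        cexp (-π * I * (∑ j, w j ^ 2) / (m ^ 2 * Fintype.card ι * τ)) *
        cexp (-π * I * x ^ 2 / τ) *
        ∏ j, jacobiTheta₂ (x / (m * Fintype.card ι * τ) + w j / (m ^ 2 * Fintype.card ι * τ) +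
          k / (m * Fintype.card ι : ℕ)) (-1 / (m ^ 2 * Fintype.card ι * τ)) := by
  have hm' : (m : ℂ) ≠ 0 := by exact_mod_cast hm
  have hn' : (Fintype.card ι : ℂ) ≠ 0 := by exact_mod_cast Fintype.card_ne_zero
  have hshift (j : ι) : m * x + w j + k * m * τ = m * (x + k * τ) + w j := by ring
  have hdiv (j : ι) : (m * (x + k * τ) + w j) / (m ^ 2 * Fintype.card ι * τ) =
      x / (m * Fintype.card ι * τ) + w j / (m ^ 2 * Fintype.card ι * τ) +
        k / (m * Fintype.card ι : ℕ) := by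
    push_cast
    field_simp
    ring
  have hgauss : cexp (-π * I * (Fintype.card ι * (m * (x + k * τ)) ^ 2 + ∑ j, w j ^ 2) /
      (m ^ 2 * Fintype.card ι * τ)) =
      cexp (-π * I * (∑ j, w j ^ 2) / (m ^ 2 * Fintype.card ι * τ)) *
        cexp (-π * I * (x + k * τ) ^ 2 / τ) := by
    rw [← Complex.exp_add]
    congr 1
    field_simp
    ring
  have hcancel := jacobiTheta₂_term_mul_exp_add_mul_sq k x hτ
  rw [Int.cast_natCast] at hcancel
  simp only [hshift, prod_jacobiTheta₂_functional_equation hw, hdiv, hgauss, ← hcancel]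
  ring

lemma sum_range_jacobiTheta₂_term_mul_prod [Nonempty ι] {m : ℕ} (hm : m ≠ 0) {τ : ℂ}
    (hτ : 0 < τ.im) {w : ι → ℂ} (hw : ∑ j, w j = 0) (x : ℂ) :
    ∑ k ∈ Finset.range (m * Fintype.card ι), jacobiTheta₂_term k x τ *
        ∏ j, jacobiTheta₂ (m * x + w j + k * m * τ) (m ^ 2 * Fintype.card ι * τ) =
      (-I * τ) ^ ((1 - (Fintype.card ι : ℂ)) / 2) /
          ((m : ℂ) ^ 2 * Fintype.card ι) ^ ((Fintype.card ι : ℂ) / 2) *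
        cexp (-π * I * (∑ j, w j ^ 2) / (m ^ 2 * Fintype.card ι * τ)) *
        (m * Fintype.card ι * zeroSumTheta (fun j => w j / (m ^ 2 * Fintype.card ι * τ))
          (-1 / (m ^ 2 * Fintype.card ι * τ))) *
        jacobiTheta₂ x τ := by
  have hm' : (m : ℂ) ≠ 0 := by exact_mod_cast hm
  have hn' : (Fintype.card ι : ℂ) ≠ 0 := by exact_mod_cast Fintype.card_ne_zero
  have hτ0 : τ ≠ 0 := by rintro rfl; simp at hτ
  have hS : 0 < (-1 / (m ^ 2 * Fintype.card ι * τ)).im :=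
    im_neg_one_div_pos (im_sq_mul_natCast_mul_pos hm Fintype.card_ne_zero hτ)
  have hb : ∑ j, w j / (m ^ 2 * Fintype.card ι * τ) = 0 := by
    rw [← Finset.sum_div, hw, zero_div]
  have harg : m * Fintype.card ι * (x / (m * Fintype.card ι * τ)) = x / τ := by field_simp
  have hmod : m ^ 2 * Fintype.card ι * (-1 / (m ^ 2 * Fintype.card ι * τ)) = -1 / τ := by
    field_simp
  have hpow : (1 / (-I * (m ^ 2 * Fintype.card ι * τ)) ^ (1 / 2 : ℂ)) ^ Fintype.card ι =
      (-I * τ) ^ ((1 - (Fintype.card ι : ℂ)) / 2) /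
        ((m : ℂ) ^ 2 * Fintype.card ι) ^ ((Fintype.card ι : ℂ) / 2) *
        (1 / (-I * τ) ^ (1 / 2 : ℂ)) := by
    have h := one_div_ofReal_mul_cpow_half_pow (c := m ^ 2 * Fintype.card ι) (w := -I * τ)
      (by positivity) (by simp [hτ0]) (Fintype.card ι)
    push_cast at h
    rwa [mul_left_comm]
  simp only [jacobiTheta₂_term_mul_prod_functional_equation hm hτ0 hw]
  rw [← Finset.mul_sum, sum_range_prod_jacobiTheta₂_add_add_div hm hS hb, harg, hmod, hpow,
    jacobiTheta₂_functional_equation x τ]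
  ring

end Theta

lemma exp_mul_exp_eq_jacobiTheta₂_term (k : ℤ) (z τ : ℂ) :
    cexp (2 * π * I * τ * ((k : ℂ) ^ 2 / 2)) * cexp (2 * (k : ℂ) * I * z) =
      jacobiTheta₂_term k (z / π) τ := by
  rw [jacobiTheta₂_term, ← Complex.exp_add]
  congr 1
  field_simp
  ring

lemma θ₃_eq_jacobiTheta₂ (z τ : ℂ) : θ₃ z τ = jacobiTheta₂ (z / π) τ :=
  tsum_congr fun k => exp_mul_exp_eq_jacobiTheta₂_term k z τ

lemma G_eq_zeroSumTheta (m n : ℕ) (y : Fin n → ℂ) (τ : ℂ) :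
    G m n y τ = m * n * zeroSumTheta (fun j => y j / π) τ := by
  rw [G, zeroSumTheta]
  congr 1
  refine tsum_congr fun r => ?_
  rw [prod_jacobiTheta₂_term, ← Complex.exp_add]
  simp only [← mul_div_assoc, ← Finset.sum_div]
  congr 1
  field_simp
  ring

theorem dual_circular_summation (τ : ℂ) (hτ : 0 < τ.im) (m n : ℕ) (hm : 0 < m) (hn : 0 < n)
    (y : Fin n → ℂ) (hy : ∑ j, y j = 0) (z : ℂ) :
    ∑ k ∈ Finset.range (m * n),
      Complex.exp (2 * Real.pi * Complex.I * τ * ((k : ℂ) ^ 2 / 2)) *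
        Complex.exp (2 * (k : ℂ) * Complex.I * z) *
        ∏ j, θ₃ ((m : ℂ) * z + y j + (k : ℂ) * m * Real.pi * τ) ((m : ℂ) ^ 2 * n * τ)
    = ((-Complex.I * τ) ^ ((1 - (n : ℂ)) / 2) / ((m : ℂ) ^ 2 * n) ^ ((n : ℂ) / 2)) *
        Complex.exp ((∑ j, y j ^ 2) / ((m : ℂ) ^ 2 * n * Real.pi * τ * Complex.I)) *
        G m n (fun j => y j / ((m : ℂ) ^ 2 * n * τ)) (-1 / ((m : ℂ) ^ 2 * n * τ)) *
        θ₃ z τ := by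
  have : Nonempty (Fin n) := ⟨⟨0, hn⟩⟩
  have hw : ∑ j, y j / π = 0 := by rw [← Finset.sum_div, hy, zero_div]
  have hweight (k : ℕ) : cexp (2 * π * I * τ * ((k : ℂ) ^ 2 / 2)) * cexp (2 * (k : ℂ) * I * z) =
      jacobiTheta₂_term k (z / π) τ := by
    simpa using exp_mul_exp_eq_jacobiTheta₂_term k z τ
  have harg (k : ℕ) (j : Fin n) :
      (m * z + y j + k * m * π * τ) / π = m * (z / π) + y j / π + k * m * τ := by
    field_simp
  have hgauss : -π * I * (∑ j, (y j / π) ^ 2) / (m ^ 2 * n * τ) =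
      (∑ j, y j ^ 2) / (m ^ 2 * n * π * τ * I) := by
    simp only [div_pow, ← Finset.sum_div]
    field_simp
    simp [neg_div]
  have hsum := sum_range_jacobiTheta₂_term_mul_prod hm.ne' hτ hw (z / π)
  rw [Fintype.card_fin, hgauss] at hsum
  simp only [hweight, θ₃_eq_jacobiTheta₂, harg, hsum, G_eq_zeroSumTheta, div_right_comm _ _ (π : ℂ)]
end

section
/- Let τ be a complex number with Im τ > 0, let q = e^{2πiτ}, let m, n be positive integers, and let y₁, y₂, …, y_n be complex numbers with y₁ + y₂ + ⋯ + y_n = 0. Define F_{m,n}(y₁,…,y_n|τ) as the unique function of τ and the y_j such that ∑_{k=0}^{mn-1} q^{k²/2} e^{2kiz} ∏_{j=1}^{n} θ₃(mz + y_j + kmπτ | m²nτ) = F_{m,n}(y₁,…,y_n|τ) · θ₃(z|τ) for all complex z. Then F_{m,n}(y₁, …, y_n | τ) = ∑_{k=0}^{n-1} q^{−m²k²/2} ∑_{r₁,…,r_n ∈ ℤ, r₁+⋯+r_n = k} q^{m²n(r₁²+⋯+r_n²)/2} e^{−2i(r₁y₁+⋯+r_ny_n)}. -/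
open scoped BigOperators

/-!
Restricted to the real line, every function of `z` in the identity is an absolutely convergent
trigonometric series in the `e^{2Niz}`, and the constant term of `θ₃(z|τ)` is `1`; hence `F` is the
constant term of the left-hand side. Expanding the product, the `k`-th summand contributes the
families `r` with `k + m ∑ rⱼ = 0`, so only the multiples `k = ml` matter, and after `r ↦ -r` the
constraint becomes `∑ rⱼ = l`. The shifts `kmπτ` then multiply the factor `q^{k²/2}` by
`q^{-km∑rⱼ} = q^{-k²}`, leaving `q^{-m²l²/2}`.
-/

open Complex
open scoped Real

section SeriesProduct

variable {R κ : Type*} [NormedCommRing R]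

theorem summable_norm_prod_fin :
    ∀ {n : ℕ} {f : Fin n → κ → R}, (∀ j, Summable fun i ↦ ‖f j i‖) →
      Summable fun r : Fin n → κ ↦ ‖∏ j, f j (r j)‖
  | 0, _, _ => (hasSum_fintype _).summable
  | n + 1, f, hf => by
    rw [← (Fin.consEquiv fun _ ↦ κ).summable_iff]
    simpa only [Function.comp_def, Fin.consEquiv_apply, Fin.prod_univ_succ, Fin.cons_zero,
      Fin.cons_succ] using (hf 0).mul_norm (summable_norm_prod_fin fun j ↦ hf j.succ)

theorem prod_tsum_eq_tsum_prod_fin [CompleteSpace R] :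
    ∀ {n : ℕ} {f : Fin n → κ → R}, (∀ j, Summable fun i ↦ ‖f j i‖) →
      ∏ j, ∑' i, f j i = ∑' r : Fin n → κ, ∏ j, f j (r j)
  | 0, _, _ => by simp
  | n + 1, f, hf => by
    have hf' (j : Fin n) : Summable fun i ↦ ‖f j.succ i‖ := hf j.succ
    rw [Fin.prod_univ_succ, prod_tsum_eq_tsum_prod_fin hf',
      tsum_mul_tsum_of_summable_norm (hf 0) (summable_norm_prod_fin hf'),
      ← (Fin.consEquiv fun _ ↦ κ).tsum_eq]
    simp only [Fin.consEquiv_apply, Fin.prod_univ_succ, Fin.cons_zero, Fin.cons_succ]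

variable {ι : Type*} [Fintype ι] {f : ι → κ → R}

theorem summable_norm_prod_pi (hf : ∀ j, Summable fun i ↦ ‖f j i‖) :
    Summable fun r : ι → κ ↦ ‖∏ j, f j (r j)‖ := by
  let e := Fintype.equivFin ι
  rw [← (e.symm.arrowCongr (Equiv.refl κ)).summable_iff]
  convert summable_norm_prod_fin fun j ↦ hf (e.symm j) using 2 with r
  simp [Function.comp_def, ← e.symm.prod_comp]

theorem prod_tsum_eq_tsum_prod_pi [CompleteSpace R] (hf : ∀ j, Summable fun i ↦ ‖f j i‖) :
    ∏ j, ∑' i, f j i = ∑' r : ι → κ, ∏ j, f j (r j) := by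
  let e := Fintype.equivFin ι
  rw [← (e.symm.arrowCongr (Equiv.refl κ)).tsum_eq, ← e.symm.prod_comp,
    prod_tsum_eq_tsum_prod_fin fun j ↦ hf (e.symm j)]
  simp [← e.symm.prod_comp]

end SeriesProduct

theorem sum_range_mul_eq_sum_range_of_not_dvd {M : Type*} [AddCommMonoid M] {m : ℕ} (hm : 0 < m)
    (n : ℕ) {g : ℕ → M} (hg : ∀ k, ¬ m ∣ k → g k = 0) :
    ∑ k ∈ Finset.range (m * n), g k = ∑ l ∈ Finset.range n, g (m * l) := by
  refine (Finset.sum_of_injOn (m * ·) (fun _ _ _ _ h ↦ Nat.eq_of_mul_eq_mul_left hm h)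
    (fun l hl ↦ by simpa [hm] using hl) (fun k hk hk' ↦ hg k ?_) fun _ _ ↦ rfl).symm
  rintro ⟨l, rfl⟩
  exact hk' ⟨l, by simpa [hm] using hk, rfl⟩

/-- The constant term of the Fourier series of a `π`-periodic function, taken as its mean value
over `[0, π]`. -/
noncomputable def constantTerm (f : ℂ → ℂ) : ℂ :=
  (∫ x in (0 : ℝ)..π, f x) / π

theorem constantTerm_const_mul (c : ℂ) (f : ℂ → ℂ) :
    constantTerm (fun z ↦ c * f z) = c * constantTerm f := by
  simp only [constantTerm, intervalIntegral.integral_const_mul, mul_div_assoc]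

theorem constantTerm_sum {κ : Type*} {s : Finset κ} {f : κ → ℂ → ℂ}
    (hf : ∀ k ∈ s, Continuous (f k)) :
    constantTerm (fun z ↦ ∑ k ∈ s, f k z) = ∑ k ∈ s, constantTerm (f k) := by
  simp only [constantTerm, ← Finset.sum_div]
  congr 1
  exact intervalIntegral.integral_finsetSum fun k hk ↦
    ((hf k hk).comp continuous_ofReal).intervalIntegrable _ _

theorem constantTerm_exp (N : ℤ) :
    constantTerm (fun z ↦ exp (2 * (N : ℂ) * I * z)) = if N = 0 then 1 else 0 := by
  have hπ : (π : ℂ) ≠ 0 := ofReal_ne_zero.2 Real.pi_ne_zero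
  split_ifs with hN
  · simp [constantTerm, hN, hπ]
  · have hfreq : 2 * (N : ℂ) * I ≠ 0 := by simp [hN]
    have hperiod : exp (2 * (N : ℂ) * I * π) = 1 := by
      rw [← exp_int_mul_two_pi_mul_I N]
      ring_nf
    simp [constantTerm, integral_exp_mul_complex hfreq, hperiod]

theorem norm_exp_two_mul_intCast_mul_I_mul_ofReal (N : ℤ) (x : ℝ) :
    ‖exp (2 * (N : ℂ) * I * x)‖ = 1 := by
  rw [← norm_exp_ofReal_mul_I (2 * N * x)]
  push_cast
  ring_nf

theorem constantTerm_tsum_mul_exp {κ : Type*} [Countable κ] {c : κ → ℂ}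
    (hc : Summable fun i ↦ ‖c i‖) (N : κ → ℤ) :
    constantTerm (fun z ↦ ∑' i, c i * exp (2 * (N i : ℂ) * I * z)) =
      ∑' i : {i // N i = 0}, c i := by
  have norm_term (i : κ) (x : ℝ) : ‖c i * exp (2 * (N i : ℂ) * I * x)‖ = ‖c i‖ := by
    rw [norm_mul, norm_exp_two_mul_intCast_mul_I_mul_ofReal, mul_one]
  have hasSum_integral : HasSum (fun i ↦ ∫ x in (0 : ℝ)..π, c i * exp (2 * (N i : ℂ) * I * x))
      (∫ x in (0 : ℝ)..π, ∑' i, c i * exp (2 * (N i : ℂ) * I * x)) :=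
    intervalIntegral.hasSum_integral_of_dominated_convergence (fun i _ ↦ ‖c i‖)
      (fun i ↦ (by fun_prop : Continuous _).aestronglyMeasurable)
      (fun i ↦ .of_forall fun x _ ↦ (norm_term i x).le) (.of_forall fun _ _ ↦ hc)
      intervalIntegrable_const
      (.of_forall fun x _ ↦ (Summable.of_norm (by simpa only [norm_term] using hc)).hasSum)
  calc constantTerm (fun z ↦ ∑' i, c i * exp (2 * (N i : ℂ) * I * z))
    _ = ∑' i, constantTerm (fun z ↦ c i * exp (2 * (N i : ℂ) * I * z)) :=
      (hasSum_integral.div_const _).tsum_eq.symm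
    _ = ∑' i, {i | N i = 0}.indicator c i := by
      simp only [constantTerm_const_mul, constantTerm_exp, mul_ite, mul_one, mul_zero,
        Set.indicator_apply, Set.mem_ofPred_eq]
    _ = ∑' i : {i // N i = 0}, c i := (tsum_subtype _ c).symm

/-- The `k`-th term `q^{k²/2} e^{2kiz}` of the series defining `θ₃ z τ`. -/
noncomputable def thetaTerm (k : ℤ) (z τ : ℂ) : ℂ :=
  exp (2 * π * I * τ * ((k : ℂ) ^ 2 / 2)) * exp (2 * (k : ℂ) * I * z)

theorem θ₃_eq_tsum_thetaTerm (z τ : ℂ) : θ₃ z τ = ∑' k, thetaTerm k z τ := rfl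

theorem thetaTerm_eq_jacobiTheta₂_term (k : ℤ) (z τ : ℂ) :
    thetaTerm k z τ = jacobiTheta₂_term k (z / π) τ := by
  have hπ : (π : ℂ) ≠ 0 := ofReal_ne_zero.2 Real.pi_ne_zero
  rw [thetaTerm, jacobiTheta₂_term, ← exp_add]
  congr 1
  field_simp
  ring

theorem thetaTerm_add (k : ℤ) (z w τ : ℂ) :
    thetaTerm k (z + w) τ = thetaTerm k w τ * exp (2 * (k : ℂ) * I * z) := by
  simp only [thetaTerm, ← exp_add]
  ring_nf

theorem summable_norm_thetaTerm (z : ℂ) {τ : ℂ} (hτ : 0 < τ.im) :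
    Summable fun k ↦ ‖thetaTerm k z τ‖ := by
  simpa only [thetaTerm_eq_jacobiTheta₂_term] using
    ((summable_jacobiTheta₂_term_iff (z / π) τ).2 hτ).norm

theorem continuous_θ₃ {τ : ℂ} (hτ : 0 < τ.im) : Continuous fun z ↦ θ₃ z τ := by
  have hJ : Continuous fun z ↦ jacobiTheta₂ z τ :=
    continuous_iff_continuousAt.2 fun z ↦ (differentiableAt_jacobiTheta₂_fst z hτ).continuousAt
  simp only [θ₃_eq_tsum_thetaTerm, thetaTerm_eq_jacobiTheta₂_term]
  exact hJ.comp (continuous_id.div_const _)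

theorem constantTerm_θ₃ {τ : ℂ} (hτ : 0 < τ.im) : constantTerm (fun z ↦ θ₃ z τ) = 1 := by
  have expansion (z : ℂ) : θ₃ z τ = ∑' k : ℤ, thetaTerm k 0 τ * exp (2 * (k : ℂ) * I * z) := by
    simp only [θ₃_eq_tsum_thetaTerm, ← thetaTerm_add, add_zero]
  simp only [expansion]
  rw [constantTerm_tsum_mul_exp (summable_norm_thetaTerm 0 hτ) fun k ↦ k]
  exact (tsum_singleton 0 fun k ↦ thetaTerm k 0 τ).trans (by simp [thetaTerm])

theorem exp_mul_prod_θ₃ {ι : Type*} [Fintype ι] {T : ℂ} (hT : 0 < T.im) (k m : ℤ) (w : ι → ℂ)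
    (z : ℂ) :
    exp (2 * (k : ℂ) * I * z) * ∏ j, θ₃ (m * z + w j) T =
      ∑' r : ι → ℤ, (∏ j, thetaTerm (r j) (w j) T) *
        exp (2 * ((k + m * ∑ j, r j : ℤ) : ℂ) * I * z) := by
  simp only [θ₃_eq_tsum_thetaTerm]
  rw [prod_tsum_eq_tsum_prod_pi fun j ↦ summable_norm_thetaTerm (m * z + w j) hT, ← tsum_mul_left]
  refine tsum_congr fun r ↦ ?_
  simp only [thetaTerm_add, Finset.prod_mul_distrib, ← exp_sum]
  rw [mul_left_comm, ← exp_add]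
  congr 2
  push_cast
  simp only [mul_add, add_mul, Finset.mul_sum, Finset.sum_mul]
  exact congrArg _ (Finset.sum_congr rfl fun j _ ↦ by ring)

theorem constantTerm_exp_mul_prod_θ₃ {ι : Type*} [Fintype ι] {T : ℂ} (hT : 0 < T.im) (k m : ℤ)
    (w : ι → ℂ) :
    constantTerm (fun z ↦ exp (2 * (k : ℂ) * I * z) * ∏ j, θ₃ (m * z + w j) T) =
      ∑' r : {r : ι → ℤ // k + m * ∑ j, r j = 0}, ∏ j, thetaTerm (r.1 j) (w j) T := by
  simp only [exp_mul_prod_θ₃ hT]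
  exact constantTerm_tsum_mul_exp
    (summable_norm_prod_pi fun j ↦ summable_norm_thetaTerm (w j) hT) _

section ThetaProduct

variable {m n : ℕ}

/-- The `k`-th summand `q^{k²/2} e^{2kiz} ∏ⱼ θ₃(mz + yⱼ + kmπτ | m²nτ)` of the sum of theta
products that `F_{m,n}` compares with `θ₃(z|τ)`. -/
noncomputable def thetaProductTerm (m : ℕ) (y : Fin n → ℂ) (τ : ℂ) (k : ℕ) (z : ℂ) : ℂ :=
  exp (2 * π * I * τ * ((k : ℂ) ^ 2 / 2)) * exp (2 * (k : ℂ) * I * z) *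
    ∏ j, θ₃ ((m : ℂ) * z + y j + (k : ℂ) * m * π * τ) ((m : ℂ) ^ 2 * n * τ)

/-- The `l`-th summand `q^{-m²l²/2} ∑_{r₁+⋯+rₙ=l} q^{m²n(r₁²+⋯+rₙ²)/2} e^{-2i(r₁y₁+⋯+rₙyₙ)}` of
the explicit formula for `F_{m,n}`. -/
noncomputable def thetaProductCoeff (m : ℕ) (y : Fin n → ℂ) (τ : ℂ) (l : ℕ) : ℂ :=
  exp (2 * π * I * τ * (-((m : ℂ) ^ 2 * (l : ℂ) ^ 2) / 2)) *
    ∑' r : {r : Fin n → ℤ // ∑ j, r j = (l : ℤ)},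
      exp (2 * π * I * τ * ((m : ℂ) ^ 2 * (n : ℂ) * (∑ j, ((r.1 j : ℂ)) ^ 2) / 2)) *
        exp (-2 * I * ∑ j, (r.1 j : ℂ) * y j)

theorem continuous_thetaProductTerm (y : Fin n → ℂ) {τ : ℂ}
    (hT : 0 < ((m : ℂ) ^ 2 * n * τ).im) (k : ℕ) : Continuous (thetaProductTerm m y τ k) := by
  have hθ := continuous_θ₃ hT
  unfold thetaProductTerm
  fun_prop

theorem constantTerm_thetaProductTerm (y : Fin n → ℂ) {τ : ℂ}
    (hT : 0 < ((m : ℂ) ^ 2 * n * τ).im) (k : ℕ) :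
    constantTerm (thetaProductTerm m y τ k) =
      exp (2 * π * I * τ * ((k : ℂ) ^ 2 / 2)) *
        ∑' r : {r : Fin n → ℤ // (k : ℤ) + m * ∑ j, r j = 0},
          ∏ j, thetaTerm (r.1 j) (y j + k * m * π * τ) ((m : ℂ) ^ 2 * n * τ) := by
  rw [← constantTerm_exp_mul_prod_θ₃ hT, ← constantTerm_const_mul]
  congr 1
  funext z
  simp only [thetaProductTerm, Int.cast_natCast, mul_assoc, add_assoc]

theorem constantTerm_thetaProductTerm_of_not_dvd (y : Fin n → ℂ) {τ : ℂ}
    (hT : 0 < ((m : ℂ) ^ 2 * n * τ).im) {k : ℕ} (hk : ¬ m ∣ k) :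
    constantTerm (thetaProductTerm m y τ k) = 0 := by
  have : IsEmpty {r : Fin n → ℤ // (k : ℤ) + m * ∑ j, r j = 0} :=
    ⟨fun ⟨r, hr⟩ ↦ hk (Int.natCast_dvd_natCast.1 ⟨-∑ j, r j, by linarith⟩)⟩
  rw [constantTerm_thetaProductTerm y hT, tsum_empty, mul_zero]

theorem mul_add_mul_sum_neg_eq_zero_iff {ι : Type*} [Fintype ι] (hm : 0 < m) (l : ℕ)
    (r : ι → ℤ) : ((m * l : ℕ) : ℤ) + m * ∑ j, (-r) j = 0 ↔ ∑ j, r j = l := by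
  have hm' : (m : ℤ) ≠ 0 := by exact_mod_cast hm.ne'
  simp only [Pi.neg_apply, Finset.sum_neg_distrib, Nat.cast_mul, ← mul_add, mul_eq_zero, hm',
    false_or]
  rw [← sub_eq_add_neg, sub_eq_zero, eq_comm]

theorem exp_mul_prod_thetaTerm_neg (y : Fin n → ℂ) (τ : ℂ) {l : ℕ} {r : Fin n → ℤ}
    (hr : ∑ j, r j = l) :
    exp (2 * π * I * τ * (((m * l : ℕ) : ℂ) ^ 2 / 2)) *
        ∏ j, thetaTerm ((-r) j) (y j + (m * l : ℕ) * m * π * τ) ((m : ℂ) ^ 2 * n * τ) =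
      exp (2 * π * I * τ * (-((m : ℂ) ^ 2 * (l : ℂ) ^ 2) / 2)) *
        (exp (2 * π * I * τ * ((m : ℂ) ^ 2 * (n : ℂ) * (∑ j, (r j : ℂ) ^ 2) / 2)) *
          exp (-2 * I * ∑ j, (r j : ℂ) * y j)) := by
  have hr' : ∑ j, (r j : ℂ) = l := by exact_mod_cast congrArg (Int.cast (R := ℂ)) hr
  have exponent :
      ∑ j, (2 * π * I * ((m : ℂ) ^ 2 * n * τ) * (((-r) j : ℂ) ^ 2 / 2) +
          2 * ((-r) j : ℂ) * I * (y j + (m * l : ℕ) * m * π * τ)) =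
        2 * π * I * τ * ((m : ℂ) ^ 2 * n * (∑ j, (r j : ℂ) ^ 2) / 2) +
          -2 * I * ∑ j, (r j : ℂ) * y j - 2 * π * I * τ * (m ^ 2 * l) * ∑ j, (r j : ℂ) := by
    simp only [Finset.mul_sum, Finset.sum_div, ← Finset.sum_add_distrib, ← Finset.sum_sub_distrib]
    refine Finset.sum_congr rfl fun j _ ↦ ?_
    push_cast [Pi.neg_apply]
    ring
  simp only [thetaTerm, ← exp_add, ← exp_sum]
  rw [exponent, hr']
  push_cast
  ring_nf

theorem constantTerm_thetaProductTerm_mul (hm : 0 < m) (y : Fin n → ℂ) {τ : ℂ}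
    (hT : 0 < ((m : ℂ) ^ 2 * n * τ).im) (l : ℕ) :
    constantTerm (thetaProductTerm m y τ (m * l)) = thetaProductCoeff m y τ l := by
  let e : {r : Fin n → ℤ // ∑ j, r j = (l : ℤ)} ≃
      {r : Fin n → ℤ // ((m * l : ℕ) : ℤ) + m * ∑ j, r j = 0} :=
    (Equiv.neg _).subtypeEquiv fun r ↦ (mul_add_mul_sum_neg_eq_zero_iff hm l r).symm
  rw [constantTerm_thetaProductTerm y hT, thetaProductCoeff, ← e.tsum_eq, ← tsum_mul_left,
    ← tsum_mul_left]
  exact tsum_congr fun r ↦ exp_mul_prod_thetaTerm_neg y τ r.2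

theorem F_explicit_formula_general {τ : ℂ} (hτ : 0 < τ.im) (hm : 0 < m) (hn : 0 < n)
    (y : Fin n → ℂ) {F : ℂ}
    (hF : ∀ z, ∑ k ∈ Finset.range (m * n), thetaProductTerm m y τ k z = F * θ₃ z τ) :
    F = ∑ l ∈ Finset.range n, thetaProductCoeff m y τ l := by
  have hT : 0 < ((m : ℂ) ^ 2 * n * τ).im := by
    rw [show (m : ℂ) ^ 2 * n * τ = ((m ^ 2 * n : ℝ) : ℂ) * τ by push_cast; ring, im_ofReal_mul]
    positivity
  calc F = constantTerm (fun z ↦ F * θ₃ z τ) := by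
        rw [constantTerm_const_mul, constantTerm_θ₃ hτ, mul_one]
    _ = constantTerm (fun z ↦ ∑ k ∈ Finset.range (m * n), thetaProductTerm m y τ k z) := by
        simp only [hF]
    _ = ∑ k ∈ Finset.range (m * n), constantTerm (thetaProductTerm m y τ k) :=
        constantTerm_sum fun k _ ↦ continuous_thetaProductTerm y hT k
    _ = ∑ l ∈ Finset.range n, constantTerm (thetaProductTerm m y τ (m * l)) :=
        sum_range_mul_eq_sum_range_of_not_dvd hm n fun _ ↦
          constantTerm_thetaProductTerm_of_not_dvd y hT
    _ = ∑ l ∈ Finset.range n, thetaProductCoeff m y τ l :=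
        Finset.sum_congr rfl fun l _ ↦ constantTerm_thetaProductTerm_mul hm y hT l

end ThetaProduct

theorem F_explicit_formula (τ : ℂ) (hτ : 0 < τ.im) (m n : ℕ) (hm : 0 < m) (hn : 0 < n)
    (y : Fin n → ℂ) (hy : ∑ j, y j = 0) (F : ℂ)
    (hF : ∀ z : ℂ,
      ∑ k ∈ Finset.range (m * n),
        Complex.exp (2 * Real.pi * Complex.I * τ * ((k : ℂ) ^ 2 / 2)) *
          Complex.exp (2 * (k : ℂ) * Complex.I * z) *
          ∏ j, θ₃ ((m : ℂ) * z + y j + (k : ℂ) * m * Real.pi * τ) ((m : ℂ) ^ 2 * n * τ)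
      = F * θ₃ z τ) :
    F = ∑ k ∈ Finset.range n,
        Complex.exp (2 * Real.pi * Complex.I * τ * (-((m : ℂ) ^ 2 * (k : ℂ) ^ 2) / 2)) *
          ∑' r : {r : Fin n → ℤ // ∑ j, r j = (k : ℤ)},
            Complex.exp (2 * Real.pi * Complex.I * τ *
                ((m : ℂ) ^ 2 * (n : ℂ) * (∑ j, ((r.1 j : ℂ)) ^ 2) / 2)) *
              Complex.exp (-2 * Complex.I * ∑ j, (r.1 j : ℂ) * y j) :=
  F_explicit_formula_general hτ hm hn y hF
end
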